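/- Let M_{n,2} denote the set of self-dual binary codes of length n (n even), with |M_{n,2}| = Π_{i=1}^{n/2−1}(2^i + 1). Then the average of the genus-g complete weight enumerators over M_{n,2} is E^(g)_{n,2}({x_v}) = Σ_A [1/((2^{n/2−1}+1)···(2^{n/2−dim_2(A)+1}+1))] · (n choose A) · x^A, where the sum runs over all type-I-admissible tuples A = (e_v)_{v∈𝔽_2^g}, (n choose A) = n!/Π_v e_v!, x^A = Π_v x_v^{e_v}, and dim_2(A) = dim_{𝔽_2}⟨{(1,v) : e_v > 0}⟩. -/

import Mathlib

open Matrix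

noncomputable section

/-- The composition `e_v(𝔠) = |{j : (c_j^{(1)},…,c_j^{(g)}) = v}|`. -/
def eTup (p n g : ℕ) (c : Fin g → (Fin n → ZMod p)) (v : Fin g → ZMod p) : ℕ :=
  (Finset.univ.filter fun j : Fin n => ∀ i, c i j = v i).card

/-- The integral quadratic form `v S v^T`, computed over `ℤ` using representatives
`{0,1}`. -/
def quadInt (p g : ℕ) (v : Fin g → ZMod p) (S : Matrix (Fin g) (Fin g) ℤ) : ℤ :=
  ∑ i, ∑ j, ((v i).val : ℤ) * S i j * ((v j).val : ℤ)

/-- A tuple `A = (e_v)_{v∈𝔽_2^g}` is type-I-admissible (for length `n`):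
`Σ_v e_v = n`, `Σ_v e_v (v S_d v^T) ≡ 0 mod 2` for all integral diagonal `S_d`, and
`Σ_v e_v (v S_nd v^T) ≡ 0 mod 4` for all integral symmetric `S_nd` with zero diagonal. -/
def TypeIAdmissible (n g : ℕ) (A : (Fin g → ZMod 2) → ℕ) : Prop :=
  (∑ v, A v = n) ∧
  (∀ d : Fin g → ℤ, (2 : ℤ) ∣ ∑ v : Fin g → ZMod 2,
      (A v : ℤ) * quadInt 2 g v (Matrix.diagonal d)) ∧
  (∀ S : Matrix (Fin g) (Fin g) ℤ, S.IsSymm → (∀ i, S i i = 0) →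
      (4 : ℤ) ∣ ∑ v : Fin g → ZMod 2, (A v : ℤ) * quadInt 2 g v S)

/-- `dim_2(A) = dim_{𝔽_2}⟨{(1,v) : e_v > 0}⟩`. -/
def dim2 (g : ℕ) (A : (Fin g → ZMod 2) → ℕ) : ℕ :=
  Module.finrank (ZMod 2)
    (Submodule.span (ZMod 2)
      {w : Fin (g + 1) → ZMod 2 | ∃ v, 0 < A v ∧ w = Fin.cons 1 v})

open Module

abbrev dB (n : ℕ) : LinearMap.BilinForm (ZMod 2) (Fin n → ZMod 2) := Matrix.toBilin' 1

abbrev perp {n : ℕ} (D : Submodule (ZMod 2) (Fin n → ZMod 2)) :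
    Submodule (ZMod 2) (Fin n → ZMod 2) := (dB n).orthogonal D

lemma mem_perp {n : ℕ} (D : Submodule (ZMod 2) (Fin n → ZMod 2)) (u : Fin n → ZMod 2) :
    u ∈ perp D ↔ ∀ c ∈ D, c ⬝ᵥ u = 0 := by
  simp [perp, LinearMap.BilinForm.mem_orthogonal_iff, Matrix.toBilin'_apply']

lemma finrank_perp {n : ℕ} (D : Submodule (ZMod 2) (Fin n → ZMod 2)) :
    finrank (ZMod 2) (perp D) + finrank (ZMod 2) D = n := by
  have h : (dB n).Nondegenerate := by
    apply LinearMap.BilinForm.nondegenerate_toBilin'_of_det_ne_zero'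
    simp
  have h1 : finrank (ZMod 2) (perp D) = finrank (ZMod 2) (Fin n → ZMod 2) - finrank (ZMod 2) D :=
    LinearMap.BilinForm.finrank_orthogonal h D
  have h2 := Submodule.finrank_le D
  simp only [Module.finrank_fin_fun] at h1 h2
  omega

lemma dot_self {n : ℕ} (u : Fin n → ZMod 2) : u ⬝ᵥ u = 1 ⬝ᵥ u := by
  unfold dotProduct
  refine Finset.sum_congr rfl fun i _ => ?_
  have : ∀ a : ZMod 2, a * a = 1 * a := by decide
  exact this _

lemma card_diff {n : ℕ} (A B : Submodule (ZMod 2) (Fin n → ZMod 2)) (h : A ≤ B) :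
    Nat.card {u : Fin n → ZMod 2 // u ∈ B ∧ u ∉ A} + 2 ^ finrank (ZMod 2) A
      = 2 ^ finrank (ZMod 2) B := by
  classical
  have hc : ∀ A : Submodule (ZMod 2) (Fin n → ZMod 2),
      (A : Set (Fin n → ZMod 2)).ncard = 2 ^ finrank (ZMod 2) A := by
    intro A
    have := Module.natCard_eq_pow_finrank (K := ZMod 2) (V := A)
    simpa [← Nat.card_coe_set_eq] using this
  have := Set.ncard_sdiff_add_ncard_of_subset
    (s := (A : Set (Fin n → ZMod 2))) (t := (B : Set (Fin n → ZMod 2))) h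
  rw [hc, hc] at this
  exact this

open scoped Classical in
lemma count_sd (n : ℕ) (𝓜 : Finset (Submodule (ZMod 2) (Fin n → ZMod 2)))
    (h𝓜 : ∀ C, C ∈ 𝓜 ↔ C = perp C) (hn : 2 ∣ n) (m : ℕ) :
    ∀ D : Submodule (ZMod 2) (Fin n → ZMod 2), D ≤ perp D → 1 ∈ D →
      finrank (ZMod 2) D + m = n / 2 →
      {C ∈ 𝓜 | D ≤ C}.card = ∏ i ∈ Finset.Icc 1 m, (2 ^ i + 1) := by
  classical
  have hfin : ∀ C ∈ 𝓜, finrank (ZMod 2) C = n / 2 := by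
    intro C hC
    have h1 := finrank_perp C
    rw [← (h𝓜 C).1 hC] at h1
    omega
  induction m with
  | zero =>
    intro D hD h1 hr
    have : {C ∈ 𝓜 | D ≤ C} = {D} := by
      ext C
      simp only [Finset.mem_filter, Finset.mem_singleton]
      constructor
      · rintro ⟨hC, hle⟩
        exact (Submodule.eq_of_le_of_finrank_eq hle (by rw [hfin C hC]; omega)).symm
      · rintro rfl
        refine ⟨(h𝓜 _).2 ?_, le_rfl⟩
        apply Submodule.eq_of_le_of_finrank_eq hD
        have := finrank_perp C
        omega
    simp [this]
  | succ m ih =>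
    intro D hD h1 hr
    set s := finrank (ZMod 2) D with hs
    set N := {C ∈ 𝓜 | D ≤ C} with hN
    let t : Finset (Fin n → ZMod 2) := {u | u ∈ perp D ∧ u ∉ D}
    have key := Finset.sum_card_bipartiteAbove_eq_sum_card_bipartiteBelow
      (s := N) (t := t) (fun C u => u ∈ C)
    have hA : ∀ C ∈ N, (Finset.bipartiteAbove (fun C u => u ∈ C) t C).card
        = Nat.card {u : Fin n → ZMod 2 // u ∈ C ∧ u ∉ D} := by
      intro C hC
      rw [Nat.subtype_card]
      intro u
      simp only [hN, Finset.mem_filter] at hC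
      simp only [Finset.bipartiteAbove, t, Finset.mem_filter, Finset.mem_univ, true_and]
      constructor
      · tauto
      · rintro ⟨h, h'⟩
        refine ⟨⟨?_, h'⟩, h⟩
        rw [(h𝓜 C).1 hC.1, mem_perp] at h
        rw [mem_perp]
        exact fun c hc => h c (hC.2 hc)
    have hA' : ∀ C ∈ N, (Finset.bipartiteAbove (fun C u => u ∈ C) t C).card
        = 2 ^ (s + m + 1) - 2 ^ s := by
      intro C hC
      rw [hA C hC]
      simp only [hN, Finset.mem_filter] at hC
      have := card_diff D C hC.2
      rw [hfin C hC.1, ← hr, ← hs] at this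
      rw [add_assoc]
      omega
    have ht : t.card = 2 ^ (s + 2 * m + 2) - 2 ^ s := by
      have := card_diff D (perp D) hD
      rw [Nat.subtype_card t (by simp [t])] at this
      have h2 := finrank_perp D
      have h3 : finrank (ZMod 2) (perp D) = s + 2 * m + 2 := by omega
      rw [h3, ← hs] at this
      omega
    have hB : ∀ u ∈ t, (Finset.bipartiteBelow (fun C u => u ∈ C) N u).card
        = ∏ i ∈ Finset.Icc 1 m, (2 ^ i + 1) := by
      intro u hu
      simp only [t, Finset.mem_filter, Finset.mem_univ, true_and] at hu
      have hu' := (mem_perp _ _).1 hu.1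
      have huu : u ⬝ᵥ u = 0 := by rw [dot_self]; exact hu' _ h1
      rw [← ih (D ⊔ Submodule.span (ZMod 2) {u})]
      · congr 1
        ext C
        simp only [Finset.bipartiteBelow, hN, Finset.mem_filter, sup_le_iff,
          Submodule.span_singleton_le_iff_mem, and_assoc]
      · intro a ha
        rw [mem_perp]
        intro b hb
        rw [Submodule.mem_sup] at ha hb
        obtain ⟨a, ha, a', ha', rfl⟩ := ha
        obtain ⟨b, hb, b', hb', rfl⟩ := hb
        rw [Submodule.mem_span_singleton] at ha' hb'
        obtain ⟨x, rfl⟩ := ha'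
        obtain ⟨y, rfl⟩ := hb'
        have e1 : b ⬝ᵥ a = 0 := (mem_perp _ _).1 (hD ha) b hb
        have e2 : u ⬝ᵥ a = 0 := by rw [dotProduct_comm]; exact hu' a ha
        simp [dotProduct_add, add_dotProduct, e1, e2, hu' b hb, huu]
      · exact Submodule.mem_sup_left h1
      · have := Submodule.finrank_sup_span_singleton (K := ZMod 2) hu.2
        omega
    rw [Finset.sum_congr rfl hA', Finset.sum_congr rfl hB, Finset.sum_const, Finset.sum_const,
      ht, smul_eq_mul, smul_eq_mul] at key
    rw [Finset.prod_Icc_succ_top (by omega)]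
    set P := ∏ i ∈ Finset.Icc 1 m, (2 ^ i + 1)
    have e1 : 2 ^ (s + m + 1) - 2 ^ s = 2 ^ s * (2 ^ (m + 1) - 1) := by
      rw [Nat.mul_sub, mul_one, ← pow_add, add_assoc]
    have e2 : 2 ^ (s + 2 * m + 2) - 2 ^ s = 2 ^ s * (2 ^ (m + 1) - 1) * (2 ^ (m + 1) + 1) := by
      rw [mul_assoc, mul_comm (2 ^ (m + 1) - 1), ← Nat.sq_sub_sq (2 ^ (m+1)) 1, Nat.mul_sub,
        ← pow_mul, ← pow_add]
      congr 2 <;> ring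
    rw [e1, e2] at key
    have hpos : 0 < 2 ^ s * (2 ^ (m + 1) - 1) := by
      have : 2 ≤ 2 ^ (m + 1) := by rw [pow_succ]; have : 0 < 2 ^ m := (by positivity); omega
      apply Nat.mul_pos (by positivity); omega
    apply Nat.eq_of_mul_eq_mul_left hpos
    rw [mul_comm, key]; ring

lemma count_fun {α : Type*} [Fintype α] [DecidableEq α] (n : ℕ) (A : α → ℕ)
    (hA : ∑ v, A v = n) :
    (Finset.univ.filter fun f : Fin n → α =>
      (fun v => (Finset.univ.filter fun j => f j = v).card) = A).card
      = Nat.multinomial Finset.univ A := by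
  have h1 := Finset.sum_pow_eq_sum_piAntidiag (Finset.univ : Finset α)
    (fun v => (MvPolynomial.X v : MvPolynomial α ℕ)) n
  have h2 : (∑ v : α, (MvPolynomial.X v : MvPolynomial α ℕ)) ^ n
      = ∑ f : Fin n → α, ∏ j, MvPolynomial.X (f j) := by
    rw [← Fintype.piFinset_univ, ← Finset.prod_univ_sum]
    simp
  have hmon : ∀ k : α → ℕ, (∏ i : α, (MvPolynomial.X i : MvPolynomial α ℕ) ^ k i)
      = MvPolynomial.monomial (Finsupp.equivFunOnFinite.symm k) 1 := by
    intro k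
    rw [MvPolynomial.monomial_eq, Finsupp.prod_fintype _ _ (by simp)]
    simp
  have h3 : ∀ f : Fin n → α, (∏ j, (MvPolynomial.X (f j) : MvPolynomial α ℕ))
      = MvPolynomial.monomial
          (Finsupp.equivFunOnFinite.symm (fun v => (Finset.univ.filter fun j => f j = v).card)) 1 := by
    intro f
    rw [← hmon, ← Finset.prod_fiberwise Finset.univ f]
    refine Finset.prod_congr rfl fun v _ => ?_
    rw [Finset.prod_congr rfl (g := fun _ => (MvPolynomial.X v : MvPolynomial α ℕ))]
    · rw [Finset.prod_const]
    · intro j hj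
      rw [(Finset.mem_filter.1 hj).2]
  rw [h2] at h1
  simp only [h3, hmon] at h1
  have h4 := congrArg (MvPolynomial.coeff (Finsupp.equivFunOnFinite.symm A)) h1
  have h5 : ∀ (a : ℕ) (p : MvPolynomial α ℕ), (a : MvPolynomial α ℕ) * p = MvPolynomial.C a * p := by
    intro a p; simp
  simp only [h5, MvPolynomial.coeff_sum, MvPolynomial.coeff_C_mul, MvPolynomial.coeff_monomial,
    EmbeddingLike.apply_eq_iff_eq] at h4
  rw [Finset.card_filter, h4, Finset.sum_eq_single A]
  · simp
  · intro b _ hb; simp [hb]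
  · intro h; exact absurd (by simp [hA]) h

lemma eTup_count (n g : ℕ) (A : (Fin g → ZMod 2) → ℕ) (hA : ∑ v, A v = n) :
    (Finset.univ.filter fun c : Fin g → (Fin n → ZMod 2) => eTup 2 n g c = A).card
      = Nat.multinomial Finset.univ A := by
  rw [← count_fun n A hA]
  refine Finset.card_bij (fun c _ => fun j i => c i j) ?_ ?_ ?_
  · intro c hc
    simp only [Finset.mem_filter, Finset.mem_univ, true_and] at hc ⊢
    rw [← hc]
    funext v
    simp [eTup, funext_iff]
  · intro c _ c' _ h
    funext i j
    exact congrFun (congrFun h j) i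
  · intro f hf
    refine ⟨fun i j => f j i, ?_, rfl⟩
    simp only [Finset.mem_filter, Finset.mem_univ, true_and] at hf ⊢
    rw [← hf]
    funext v
    simp [eTup, funext_iff]

lemma sum_eTup (n g : ℕ) (c : Fin g → (Fin n → ZMod 2)) (F : (Fin g → ZMod 2) → ℤ) :
    ∑ v, (eTup 2 n g c v : ℤ) * F v = ∑ j, F (fun i => c i j) := by
  rw [← Finset.sum_fiberwise Finset.univ (fun j i => c i j)]
  refine Finset.sum_congr rfl fun v _ => ?_
  rw [Finset.sum_congr rfl (g := fun _ => F v)]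
  · simp [eTup, funext_iff]
  · intro j hj
    rw [(Finset.mem_filter.1 hj).2]

lemma eTup_sum (n g : ℕ) (c : Fin g → (Fin n → ZMod 2)) : ∑ v, eTup 2 n g c v = n := by
  have := sum_eTup n g c (fun _ => 1)
  simp at this
  exact_mod_cast this

def gramZ {n g : ℕ} (c : Fin g → (Fin n → ZMod 2)) (i k : Fin g) : ℤ :=
  ∑ j, ((c i j).val : ℤ) * ((c k j).val : ℤ)

lemma gram_symm {n g : ℕ} (c : Fin g → (Fin n → ZMod 2)) (i k : Fin g) :
    gramZ c i k = gramZ c k i := by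
  simp [gramZ, mul_comm]

lemma gram_cast {n g : ℕ} (c : Fin g → (Fin n → ZMod 2)) (i k : Fin g) :
    (2 : ℤ) ∣ gramZ c i k ↔ c i ⬝ᵥ c k = 0 := by
  have := ZMod.intCast_zmod_eq_zero_iff_dvd (gramZ c i k) 2
  rw [show ((2:ℕ):ℤ) = 2 from rfl] at this
  rw [← this]
  simp [gramZ, dotProduct]

lemma quad_sum {n g : ℕ} (c : Fin g → (Fin n → ZMod 2)) (S : Matrix (Fin g) (Fin g) ℤ) :
    ∑ v, (eTup 2 n g c v : ℤ) * quadInt 2 g v S = ∑ i, ∑ k, S i k * gramZ c i k := by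
  rw [sum_eTup]
  unfold quadInt gramZ
  rw [Finset.sum_comm]
  refine Finset.sum_congr rfl fun i _ => ?_
  rw [Finset.sum_comm]
  refine Finset.sum_congr rfl fun k _ => ?_
  rw [Finset.mul_sum]
  refine Finset.sum_congr rfl fun j _ => ?_
  ring

lemma even_sum {g : ℕ} (T : Fin g → Fin g → ℤ) (hT : ∀ i k, T i k = T k i)
    (h0 : ∀ i, T i i = 0) : (2 : ℤ) ∣ ∑ i, ∑ k, T i k := by
  have := ZMod.intCast_zmod_eq_zero_iff_dvd (∑ i, ∑ k, T i k) 2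
  rw [show ((2:ℕ):ℤ) = 2 from rfl] at this
  rw [← this]
  push_cast
  rw [← Fintype.sum_prod_type']
  refine Finset.sum_involution (fun p _ => (p.2, p.1)) ?_ ?_ ?_ ?_
  · rintro ⟨i, k⟩ _
    simp only
    rw [hT i k]
    exact CharTwo.add_self_eq_zero _
  · rintro ⟨i, k⟩ _ h h'
    simp only [Prod.mk.injEq] at h'
    obtain ⟨rfl, -⟩ := h'
    simp [h0] at h
  · simp
  · simp

lemma adm_iff {n g : ℕ} (c : Fin g → (Fin n → ZMod 2)) :
    TypeIAdmissible n g (eTup 2 n g c) ↔ ∀ i k, c i ⬝ᵥ c k = 0 := by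
  unfold TypeIAdmissible
  simp only [quad_sum, ← gram_cast, eTup_sum, true_and]
  constructor
  · rintro ⟨h1, h2⟩ i k
    by_cases hik : i = k
    · subst hik
      have := h1 (Pi.single i 1)
      simpa [Matrix.diagonal_apply, Pi.single_apply] using this
    · have := h2 (Matrix.single i k 1 + Matrix.single k i 1) ?_ ?_
      · have e : ∑ a, ∑ b, (Matrix.single i k 1 + Matrix.single k i 1 : Matrix _ _ ℤ) a b
            * gramZ c a b = 2 * gramZ c i k := by
          simp only [Matrix.add_apply, add_mul, Finset.sum_add_distrib, Matrix.single_apply,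
            ite_mul, one_mul, zero_mul, ite_and, Finset.sum_ite_irrel, Finset.sum_ite_eq,
            Finset.mem_univ, if_true, Finset.sum_const_zero]
          rw [gram_symm c k i]; ring
        rw [e] at this
        omega
      · simp [Matrix.IsSymm, add_comm]
      · intro a
        simp only [Matrix.add_apply, Matrix.single_apply]
        rw [if_neg, if_neg] <;> grind
  · intro h
    refine ⟨fun d => Finset.dvd_sum fun i _ => Finset.dvd_sum fun k _ =>
      Dvd.dvd.mul_left (h i k) _, fun S hS h0 => ?_⟩
    choose H hH using h
    have := even_sum (fun i k => S i k * H i k) ?_ ?_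
    · have e : ∑ i, ∑ k, S i k * gramZ c i k = 2 * ∑ i, ∑ k, S i k * H i k := by
        simp only [Finset.mul_sum]
        refine Finset.sum_congr rfl fun i _ => Finset.sum_congr rfl fun k _ => ?_
        rw [hH]; ring
      rw [e]
      omega
    · intro i k
      have h1 := gram_symm c i k
      rw [hH, hH] at h1
      rw [hS.apply k i, show H i k = H k i by omega]
    · intro i; simp [h0]

def Dc {n g : ℕ} (c : Fin g → (Fin n → ZMod 2)) : Submodule (ZMod 2) (Fin n → ZMod 2) :=
  Submodule.span (ZMod 2) (Set.range (Fin.cons 1 c : Fin (g + 1) → (Fin n → ZMod 2)))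

lemma finrank_Dc {n g : ℕ} (c : Fin g → (Fin n → ZMod 2)) :
    finrank (ZMod 2) (Dc c) = dim2 g (eTup 2 n g c) := by
  let M : Matrix (Fin (g + 1)) (Fin n) (ZMod 2) := Matrix.of (Fin.cons 1 c)
  have h1 := M.rank_eq_finrank_span_row
  have h2 := M.rank_eq_finrank_span_cols
  have h3 : {w : Fin (g + 1) → ZMod 2 | ∃ v, 0 < eTup 2 n g c v ∧ w = Fin.cons 1 v}
      = Set.range M.col := by
    have hcol : ∀ j, M.col j = Fin.cons 1 (fun i => c i j) := by
      intro j
      funext i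
      refine Fin.cases ?_ (fun i => ?_) i <;> simp [M, Matrix.col]
    ext w
    simp only [Set.mem_ofPred_eq, Set.mem_range, hcol, eTup, Finset.card_pos]
    constructor
    · rintro ⟨v, ⟨j, hj⟩, rfl⟩
      simp only [Finset.mem_filter, Finset.mem_univ, true_and] at hj
      exact ⟨j, by rw [show (fun i => c i j) = v from funext hj]⟩
    · rintro ⟨j, rfl⟩
      exact ⟨_, ⟨j, by simp⟩, rfl⟩
  unfold dim2 Dc
  rw [h3, ← h2, h1]
  rfl

lemma Dc_le {n g : ℕ} (c : Fin g → (Fin n → ZMod 2))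
    (C : Submodule (ZMod 2) (Fin n → ZMod 2)) :
    Dc c ≤ C ↔ 1 ∈ C ∧ ∀ i, c i ∈ C := by
  unfold Dc
  rw [Submodule.span_le, Set.range_subset_iff, Fin.forall_fin_succ]
  simp

lemma Dc_so {n g : ℕ} (hn : 2 ∣ n) (c : Fin g → (Fin n → ZMod 2)) :
    Dc c ≤ perp (Dc c) ↔ TypeIAdmissible n g (eTup 2 n g c) := by
  rw [adm_iff]
  have hm : ∀ i, c i ∈ Dc c := ((Dc_le c _).1 le_rfl).2
  constructor
  · intro h i k
    exact (mem_perp _ _).1 (h (hm k)) _ (hm i)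
  · intro h
    have h11 : (1 : Fin n → ZMod 2) ⬝ᵥ 1 = 0 := by
      simp [dotProduct]
      exact (ZMod.natCast_eq_zero_iff n 2).2 hn
    have aux : ∀ u, 1 ⬝ᵥ u = 0 → (∀ i, c i ⬝ᵥ u = 0) → u ∈ perp (Dc c) := by
      intro u h1 h2
      have : Dc c ≤ perp (Submodule.span (ZMod 2) {u}) := by
        rw [Dc_le]
        constructor
        · rw [mem_perp]; intro w hw
          obtain ⟨a, rfl⟩ := Submodule.mem_span_singleton.1 hw
          rw [smul_dotProduct, dotProduct_comm, h1, smul_zero]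
        · intro i
          rw [mem_perp]; intro w hw
          obtain ⟨a, rfl⟩ := Submodule.mem_span_singleton.1 hw
          rw [smul_dotProduct, dotProduct_comm, h2, smul_zero]
      rw [mem_perp]
      intro w hw
      rw [dotProduct_comm]
      exact (mem_perp _ _).1 (this hw) u (Submodule.mem_span_singleton_self u)
    rw [Dc_le]
    refine ⟨aux _ h11 fun i => ?_, fun k => aux _ ?_ fun i => h i k⟩
    · rw [dotProduct_comm, ← dot_self]; exact h i i
    · rw [← dot_self]; exact h k k

lemma prod_split (N d : ℕ) (hd : d + 1 ≤ N) :
    (∏ i ∈ Finset.Icc 1 (N - 1), (2 ^ i + 1)) =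
      (∏ i ∈ Finset.Icc 1 (N - (d + 1)), (2 ^ i + 1)) *
        ∏ j ∈ Finset.Icc 1 d, (2 ^ (N - j) + 1) := by
  induction d with
  | zero => simp
  | succ d ih =>
    rw [ih (by omega), Finset.prod_Icc_succ_top (by omega : 1 ≤ d + 1)]
    obtain ⟨k, rfl⟩ : ∃ k, N = k + (d + 2) := ⟨N - (d + 2), by omega⟩
    rw [show k + (d + 2) - (d + 1) = k + 1 by omega, show k + (d + 2) - (d + 1 + 1) = k by omega,
      Finset.prod_Icc_succ_top (by omega : 1 ≤ k + 1)]
    ring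

/-- The average of genus-`g` complete weight enumerators over the set `𝓜` of self-dual
binary codes of even length `n`: `|𝓜| = Π_{i=1}^{n/2−1}(2^i+1)` and the average equals
`Σ_A (2^{n/2−1}+1)⁻¹⋯(2^{n/2−dim₂(A)+1}+1)⁻¹ (n choose A) x^A` over all
type-I-admissible tuples `A`. -/
theorem stmt18 (n g : ℕ) (hn : 2 ∣ n) (x : (Fin g → ZMod 2) → ℂ)
    (𝓜 : Finset (Submodule (ZMod 2) (Fin n → ZMod 2)))
    (h𝓜 : ∀ C : Submodule (ZMod 2) (Fin n → ZMod 2),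
      C ∈ 𝓜 ↔ (C : Set (Fin n → ZMod 2)) = {c' | ∀ c ∈ C, c ⬝ᵥ c' = 0}) :
    𝓜.card = ∏ i ∈ Finset.Icc 1 (n / 2 - 1), (2 ^ i + 1) ∧
    (𝓜.card : ℂ)⁻¹ * ∑ C ∈ 𝓜, ∑' 𝔠 : Fin g → C,
        ∏ v : Fin g → ZMod 2,
          x v ^ eTup 2 n g (fun i => ((𝔠 i : Fin n → ZMod 2))) v =
      ∑' A : {A : (Fin g → ZMod 2) → ℕ // TypeIAdmissible n g A},
        (∏ j ∈ Finset.Icc 1 (dim2 g A.1 - 1), ((2 : ℂ) ^ (n / 2 - j) + 1))⁻¹ *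
          (Nat.multinomial Finset.univ A.1 : ℂ) * ∏ v, x v ^ A.1 v := by
  classical
  have h𝓜' : ∀ C, C ∈ 𝓜 ↔ C = perp C := by
    intro C
    rw [h𝓜, ← SetLike.coe_set_eq (p := C) (q := perp C)]
    have : (perp C : Set (Fin n → ZMod 2)) = {c' | ∀ c ∈ C, c ⬝ᵥ c' = 0} := by
      ext u
      exact mem_perp C u
    rw [this]
  have hone : ∀ C ∈ 𝓜, (1 : Fin n → ZMod 2) ∈ C := by
    intro C hC
    have hC' := (h𝓜' C).1 hC
    rw [hC', mem_perp]
    intro c hc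
    rw [dotProduct_comm, ← dot_self]
    rw [hC', mem_perp] at hc
    exact hc c (by rw [hC', mem_perp]; exact hc)
  have hcount : ∀ (g : ℕ) (c : Fin g → (Fin n → ZMod 2)), TypeIAdmissible n g (eTup 2 n g c) →
      (𝓜.filter fun C => ∀ i, c i ∈ C).card * ∏ j ∈ Finset.Icc 1 (dim2 g (eTup 2 n g c) - 1),
        (2 ^ (n / 2 - j) + 1) = ∏ i ∈ Finset.Icc 1 (n / 2 - 1), (2 ^ i + 1) := by
    intro g c hc
    have hso := (Dc_so hn c).2 hc
    have hfr := finrank_perp (Dc c)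
    have hle := Submodule.finrank_mono hso
    rw [← finrank_Dc]
    have h1 : 1 ∈ Dc c := ((Dc_le c _).1 le_rfl).1
    have hcnt := count_sd n 𝓜 h𝓜' hn (n / 2 - finrank (ZMod 2) (Dc c)) (Dc c) hso h1 (by omega)
    have heq : (𝓜.filter fun C => ∀ i, c i ∈ C) = 𝓜.filter fun C => Dc c ≤ C := by
      refine Finset.filter_congr fun C hC => ?_
      rw [Dc_le]
      exact ⟨fun h => ⟨hone C hC, h⟩, fun h => h.2⟩
    rw [heq, hcnt]
    rcases Nat.eq_zero_or_pos n with rfl | hpos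
    · have : finrank (ZMod 2) (Dc c) = 0 := by omega
      simp [this]
    · have : 0 < finrank (ZMod 2) (Dc c) := by
        rw [Module.finrank_pos_iff_exists_ne_zero]
        refine ⟨⟨1, h1⟩, fun h => ?_⟩
        have := congrFun (congrArg Subtype.val h) ⟨0, hpos⟩
        simp at this
      obtain ⟨d, hd⟩ : ∃ d, finrank (ZMod 2) (Dc c) = d + 1 := ⟨_, (Nat.succ_pred_eq_of_pos this).symm⟩
      rw [hd, prod_split (n / 2) d (by omega)]
      rfl
  have hcard : 𝓜.card = ∏ i ∈ Finset.Icc 1 (n / 2 - 1), (2 ^ i + 1) := by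
    have h := hcount 0 (fun i => i.elim0) ((adm_iff _).2 fun i => i.elim0)
    have hd : dim2 0 (eTup 2 n 0 fun i => i.elim0) ≤ 1 := by
      unfold dim2
      exact (Submodule.finrank_le _).trans (by simp)
    rw [Finset.filter_true_of_mem (fun C _ i => i.elim0), Nat.sub_eq_zero_of_le hd] at h
    simpa using h
  refine ⟨hcard, ?_⟩
  have hcne : (𝓜.card : ℂ) ≠ 0 := by
    rw [hcard]
    exact_mod_cast Finset.prod_ne_zero_iff.2 fun i _ => by positivity
  let F : ((Fin g → ZMod 2) → ℕ) → ℂ := fun A => ∏ v, x v ^ A v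
  let w : ((Fin g → ZMod 2) → ℕ) → ℂ := fun A =>
    (∏ j ∈ Finset.Icc 1 (dim2 g A - 1), ((2 : ℂ) ^ (n / 2 - j) + 1))⁻¹
  have hL : ∀ C ∈ 𝓜, (∑' 𝔠 : Fin g → C, ∏ v : Fin g → ZMod 2,
          x v ^ eTup 2 n g (fun i => ((𝔠 i : Fin n → ZMod 2))) v)
        = ∑ c : Fin g → (Fin n → ZMod 2), if ∀ i, c i ∈ C then F (eTup 2 n g c) else 0 := by
    intro C _
    rw [tsum_fintype, ← Finset.sum_filter]
    refine Finset.sum_bij (fun 𝔠 _ i => (𝔠 i : Fin n → ZMod 2)) ?_ ?_ ?_ ?_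
    · intro a _; simp
    · intro a _ b _ h
      funext i
      exact Subtype.ext (congrFun h i)
    · intro c hc
      simp only [Finset.mem_filter, Finset.mem_univ, true_and] at hc
      exact ⟨fun i => ⟨c i, hc i⟩, Finset.mem_univ _, rfl⟩
    · intro a _; rfl
  rw [Finset.sum_congr rfl hL, Finset.sum_comm, Finset.mul_sum]
  have hterm : ∀ c : Fin g → (Fin n → ZMod 2),
      (𝓜.card : ℂ)⁻¹ * (∑ C ∈ 𝓜, if ∀ i, c i ∈ C then F (eTup 2 n g c) else 0)
        = if TypeIAdmissible n g (eTup 2 n g c) then w (eTup 2 n g c) * F (eTup 2 n g c)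
          else 0 := by
    intro c
    rw [← Finset.sum_filter, Finset.sum_const, nsmul_eq_mul]
    split_ifs with hc
    · have h := hcount g c hc
      rw [← hcard] at h
      have h' : ((𝓜.filter fun C => ∀ i, c i ∈ C).card : ℂ) *
          ∏ j ∈ Finset.Icc 1 (dim2 g (eTup 2 n g c) - 1), ((2 : ℂ) ^ (n / 2 - j) + 1)
            = 𝓜.card := by exact_mod_cast h
      have hne : (∏ j ∈ Finset.Icc 1 (dim2 g (eTup 2 n g c) - 1), ((2 : ℂ) ^ (n / 2 - j) + 1)) ≠ 0 := by
        intro h0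
        rw [h0, mul_zero] at h'
        exact hcne h'.symm
      rw [← mul_assoc]
      congr 1
      simp only [w]
      apply eq_inv_of_mul_eq_one_left
      rw [mul_assoc, h', inv_mul_cancel₀ hcne]
    · have : (𝓜.filter fun C => ∀ i, c i ∈ C) = ∅ := by
        rw [Finset.filter_eq_empty_iff]
        intro C hC h
        apply hc
        rw [adm_iff]
        intro i k
        have := h k
        rw [(h𝓜' C).1 hC, mem_perp] at this
        exact this _ (h i)
      simp [this]
  rw [Finset.sum_congr rfl fun c _ => hterm c, ← Finset.sum_filter]
  let T : Finset ((Fin g → ZMod 2) → ℕ) :=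
    (Finset.piAntidiag Finset.univ n).filter (TypeIAdmissible n g)
  have hT : ∀ A, A ∈ T ↔ TypeIAdmissible n g A := by
    intro A
    simp only [T, Finset.mem_filter, Finset.mem_piAntidiag]
    exact ⟨fun h => h.2, fun h => ⟨⟨h.1, by simp⟩, h⟩⟩
  let _ : Fintype {A : (Fin g → ZMod 2) → ℕ // TypeIAdmissible n g A} := Fintype.subtype T hT
  rw [tsum_fintype]
  rw [← Finset.sum_subtype T hT
    (fun A => w A * (Nat.multinomial Finset.univ A : ℂ) * F A)]
  rw [← Finset.sum_fiberwise_of_maps_to (t := T) (g := eTup 2 n g)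
    (fun c hc => (hT _).2 (Finset.mem_filter.1 hc).2)]
  refine Finset.sum_congr rfl fun A hA => ?_
  have hA' := (hT A).1 hA
  rw [Finset.sum_congr rfl (g := fun _ => w A * F A)
    (fun c hc => by rw [(Finset.mem_filter.1 hc).2]), Finset.sum_const, nsmul_eq_mul,
    ← eTup_count n g A hA'.1, Finset.filter_filter]
  have : (Finset.univ.filter fun c : Fin g → (Fin n → ZMod 2) =>
      TypeIAdmissible n g (eTup 2 n g c) ∧ eTup 2 n g c = A)
      = Finset.univ.filter fun c => eTup 2 n g c = A := by
    refine Finset.filter_congr fun c _ => ?_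
    exact ⟨fun h => h.2, fun h => ⟨h ▸ hA', h⟩⟩
  rw [this]
  ring
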